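/- Let ℰ = {ε_p(j), j ∈ [p]} be a Gaussian triangular array with standard Normal marginals, u_p = Φ^{←}(1 − 1/p), and suppose P(|max_{j∈[p]} ε_p(j)/u_p − 1| > δ_p) → 0 for some positive sequence δ_p → 0. Let f: ℝ → ℝ be non-decreasing, differentiable, eventually strictly increasing, with lim_{x→∞} f(x) ≠ 0, and whose derivative f′ is either eventually increasing or eventually decreasing as x → ∞. Set η_p(j) := f(ε_p(j)) and v_p := f(u_p). Then for every sequence d_p with d_p ≥ d_p* := u_p δ_p · max{|f′(u_p(1−δ_p))|, |f′(u_p(1+δ_p))|} / |f(u_p)|, one has P(|max_{j∈[p]} η_p(j)/v_p − 1| > d_p) → 0 as p → ∞. -/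

import Mathlib

open MeasureTheory ProbabilityTheory Filter Topology

/-- The standard Normal cumulative distribution function `Φ`. -/
noncomputable def stdGaussianCDF (u : ℝ) : ℝ :=
  ∫ x in Set.Iic u, Real.exp (-x ^ 2 / 2) / Real.sqrt (2 * Real.pi)

/-- The generalized inverse (quantile function) `Φ^{←}` of the standard Normal cdf. -/
noncomputable def stdGaussianQuantile (y : ℝ) : ℝ :=
  sInf {x : ℝ | y ≤ stdGaussianCDF x}

/-- `u_p = Φ^{←}(1 - 1/p)`. -/
noncomputable def uQuantile (p : ℕ) : ℝ :=
  stdGaussianQuantile (1 - 1 / (p : ℝ))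

/-- A finite family of random variables is jointly Gaussian if every linear
combination is Gaussian. -/
def IsJointGaussian {Ω : Type*} [MeasureSpace Ω] {ι : Type*} [Fintype ι]
    (X : ι → Ω → ℝ) : Prop :=
  ∀ c : ι → ℝ, ∃ m : ℝ, ∃ v : NNReal,
    MeasureTheory.Measure.map (fun ω => ∑ i, c i * X i ω) ℙ =
      ProbabilityTheory.gaussianReal m v

lemma stdGaussianCDF_eq_cdf (u : ℝ) : stdGaussianCDF u = cdf (gaussianReal 0 1) u := by
  rw [cdf_eq_real, measureReal_def, gaussianReal_apply_eq_integral 0 one_ne_zero,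
    ENNReal.toReal_ofReal (integral_nonneg fun x => gaussianPDFReal_nonneg 0 1 x)]
  refine integral_congr_ae (ae_of_all _ fun x => ?_)
  simp only [gaussianPDFReal, NNReal.coe_one, mul_one, sub_zero]
  ring

lemma stdGaussianCDF_lt_one (u : ℝ) : stdGaussianCDF u < 1 := by
  rw [stdGaussianCDF_eq_cdf, cdf_eq_real, ← compl_compl (Set.Iic u),
    probReal_compl_eq_one_sub measurableSet_Iic.compl, Set.compl_Iic, sub_lt_self_iff,
    measureReal_def]
  refine ENNReal.toReal_pos (fun h => ?_) (measure_ne_top _ _)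
  have := gaussianReal_absolutelyContinuous' 0 one_ne_zero h
  simp at this

lemma tendsto_uQuantile_atTop : Tendsto uQuantile atTop atTop := by
  refine tendsto_atTop.2 fun K => ?_
  have hp : Tendsto (fun p : ℕ => 1 - 1 / (p : ℝ)) atTop (𝓝 1) := by
    simpa using (tendsto_const_nhds (x := (1 : ℝ))).sub tendsto_one_div_atTop_nhds_zero_nat
  filter_upwards [hp.eventually (lt_mem_nhds (stdGaussianCDF_lt_one K)), eventually_gt_atTop 0]
    with p hp hp0
  refine le_csInf ?_ fun x hx => ?_
  · have hlt : 1 - 1 / (p : ℝ) < 1 := sub_lt_self _ (by positivity)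
    obtain ⟨x, hx⟩ :=
      ((tendsto_cdf_atTop (gaussianReal 0 1)).eventually (lt_mem_nhds hlt)).exists
    exact ⟨x, by rw [Set.mem_ofPred_eq, stdGaussianCDF_eq_cdf]; exact hx.le⟩
  · by_contra! hxK
    have := monotone_cdf (gaussianReal 0 1) hxK.le
    rw [← stdGaussianCDF_eq_cdf, ← stdGaussianCDF_eq_cdf] at this
    have hx' : 1 - 1 / (p : ℝ) ≤ stdGaussianCDF x := hx
    linarith

lemma StrictMonoOn.eventually_ne_atTop {f : ℝ → ℝ} {M : ℝ} (hf : StrictMonoOn f (Set.Ici M))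
    (c : ℝ) : ∀ᶠ x in atTop, f x ≠ c := by
  by_cases h : ∃ x ∈ Set.Ici M, f x = c
  · obtain ⟨x, hxM, rfl⟩ := h
    filter_upwards [eventually_gt_atTop x] with y hy
    exact (hf hxM (Set.mem_Ici.2 (le_trans hxM hy.le)) hy).ne'
  · filter_upwards [eventually_ge_atTop M] with y hy hc
    exact h ⟨y, hy, hc⟩

/-- Mean value bound for a monotone function whose derivative is monotone or antitone on `[a, b]`. -/
lemma Monotone.abs_sub_le_max_deriv_mul {f : ℝ → ℝ} (hf : Monotone f) (hd : Differentiable ℝ f)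
    {a b x y : ℝ} (h : MonotoneOn (deriv f) (Set.Icc a b) ∨ AntitoneOn (deriv f) (Set.Icc a b))
    (hx : x ∈ Set.Icc a b) (hy : y ∈ Set.Icc a b) :
    |f y - f x| ≤ max |deriv f a| |deriv f b| * |y - x| := by
  have hab : a ≤ b := hx.1.trans hx.2
  refine (convex_Icc a b).norm_image_sub_le_of_norm_deriv_le
    (fun z _ => hd z) (fun z hz => ?_) hx hy
  have h0 : 0 ≤ deriv f z := hf.deriv_nonneg
  rw [Real.norm_eq_abs, abs_of_nonneg h0]
  rcases h with h | h
  · exact (h hz (Set.right_mem_Icc.2 hab) hz.2).trans ((le_abs_self _).trans (le_max_right _ _))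
  · exact (h (Set.left_mem_Icc.2 hab) hz hz.1).trans ((le_abs_self _).trans (le_max_left _ _))

/-- Concentration of maxima for monotone functions of a Gaussian array: if
`P(|max ε_p(i)/u_p - 1| > δ_p) → 0` and `f` is non-decreasing, differentiable,
eventually strictly increasing, with limit at `+∞` different from `0` and eventually
monotone derivative, then `P(|max f(ε_p(i))/f(u_p) - 1| > d_p) → 0` for every `d_p`
dominating `d_p* = u_p δ_p max{|f'(u_p(1-δ_p))|, |f'(u_p(1+δ_p))|}/|f(u_p)|`. -/
theorem concentration_monotone_function
    {Ω : Type*} [MeasureSpace Ω] [IsProbabilityMeasure (ℙ : Measure Ω)]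
    (ε : (p : ℕ) → Fin p → Ω → ℝ)
    (hmeas : ∀ p i, Measurable (ε p i))
    (hGauss : ∀ p, IsJointGaussian (ε p))
    (hmarg : ∀ p i, Measure.map (ε p i) ℙ = gaussianReal 0 1)
    (δ : ℕ → ℝ) (hδ_pos : ∀ p, 0 < δ p) (hδ0 : Tendsto δ atTop (𝓝 0))
    (hconc : Tendsto (fun p : ℕ =>
        ℙ {ω | δ p < |(⨆ i : Fin p, ε p i ω) / uQuantile p - 1|}) atTop (𝓝 0))
    (f : ℝ → ℝ)
    (hf_mono : Monotone f)
    (hf_diff : Differentiable ℝ f)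
    (hf_strict : ∃ M : ℝ, StrictMonoOn f (Set.Ici M))
    (hf_lim : ¬ Tendsto f atTop (𝓝 0))
    (hf_deriv_mono : (∃ M : ℝ, MonotoneOn (deriv f) (Set.Ici M)) ∨
      (∃ M : ℝ, AntitoneOn (deriv f) (Set.Ici M)))
    (d : ℕ → ℝ)
    (hd : ∀ p : ℕ,
      uQuantile p * δ p *
          max |deriv f (uQuantile p * (1 - δ p))| |deriv f (uQuantile p * (1 + δ p))| /
        |f (uQuantile p)| ≤ d p) :
    Tendsto (fun p : ℕ =>
        ℙ {ω | d p < |(⨆ i : Fin p, f (ε p i ω)) / f (uQuantile p) - 1|})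
      atTop (𝓝 0) := by
  have hu := tendsto_uQuantile_atTop
  obtain ⟨M, hM⟩ : ∃ M : ℝ, MonotoneOn (deriv f) (Set.Ici M) ∨ AntitoneOn (deriv f) (Set.Ici M) :=
    exists_or.2 hf_deriv_mono
  obtain ⟨N, hN⟩ := hf_strict
  refine tendsto_of_tendsto_of_tendsto_of_le_of_le' tendsto_const_nhds hconc
    (Eventually.of_forall fun _ => zero_le) ?_
  filter_upwards [hu.eventually (hN.eventually_ne_atTop 0), hu.eventually_gt_atTop 0,
    hu.eventually_ge_atTop (2 * M), hδ0.eventually (ge_mem_nhds (by norm_num : (0 : ℝ) < 1 / 2)),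
    eventually_gt_atTop 0] with p hfu hu0 huM hδ hp
  refine measure_mono fun ω hω => ?_
  simp only [Set.mem_ofPred_eq] at hω ⊢
  contrapose! hω
  have : Nonempty (Fin p) := ⟨⟨0, hp⟩⟩
  rw [← hf_mono.map_ciSup_of_continuousAt hf_diff.continuous.continuousAt
    (Set.finite_range fun i => ε p i ω).bddAbove]
  generalize (⨆ i : Fin p, ε p i ω) = m at hω ⊢
  refine le_trans ?_ (hd p)
  generalize uQuantile p = u at *
  have hδp := hδ_pos p
  have hmu : |m - u| ≤ u * δ p := by
    rwa [div_sub_one hu0.ne', abs_div, abs_of_pos hu0, div_le_iff₀' hu0] at hω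
  have huδ : 0 < u * δ p := mul_pos hu0 hδp
  have hsub : Set.Icc (u * (1 - δ p)) (u * (1 + δ p)) ⊆ Set.Ici M :=
    fun z hz => Set.mem_Ici.2 (by nlinarith [hz.1])
  have hmem := abs_le.1 hmu
  have key := hf_mono.abs_sub_le_max_deriv_mul hf_diff (hM.imp (·.mono hsub) (·.mono hsub))
    (x := u) (y := m) ⟨by linarith, by linarith⟩ ⟨by linarith, by linarith⟩
  rw [div_sub_one hfu, abs_div]
  gcongr
  rw [mul_comm]
  exact key.trans (by gcongr)
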